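/- Rippa's leave-one-out cross validation identity: let A be an N×N real invertible matrix (N ≥ 2), f ∈ ℝ^N, c = A⁻¹ f, and fix an index i. Let B be the (N−1)×(N−1) submatrix of A obtained by deleting row i and column i, assumed invertible, and let g ∈ ℝ^{N−1} be f with its i-th entry deleted and d = B⁻¹ g. Then the leave-one-out residual satisfies f_i − Σ_{k≠i} A_{ik} d_k = c_i / (A⁻¹)_{ii}, where (A⁻¹)_{ii} ≠ 0. -/

import Mathlib

/-!
Extend the coefficients `d` by zero at `i` to a vector `e`. Then `f - A e` vanishes off `i`, so it
equals `r δᵢ`, where `r` is the leave-one-out residual and `δᵢ` the `i`-th standard basis vector.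
Applying `A⁻¹` and reading off the `i`-th entry, where `e` vanishes, gives `(A⁻¹ f)ᵢ = r (A⁻¹)ᵢᵢ`.
For `f = A δᵢ` the left-hand side is `1`, so `(A⁻¹)ᵢᵢ` is invertible.
-/

section LeaveOneOut

open Matrix

variable {ι R : Type*} [Fintype ι]

theorem mulVec_extend_zero {m κ : Type*} [Fintype κ] [NonUnitalNonAssocSemiring R] {e : κ → ι}
    (he : Function.Injective e) (A : Matrix m ι R) (d : κ → R) :
    A *ᵥ Function.extend e d 0 = A.submatrix id e *ᵥ d := by
  funext k
  simp only [mulVec, dotProduct, submatrix_apply, id]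
  refine (Fintype.sum_of_injective e he _ _ (fun l hl => ?_) fun l => ?_).symm
  · rw [Function.extend_apply' _ _ _ hl, Pi.zero_apply, mul_zero]
  · rw [he.extend_apply]

variable [DecidableEq ι] [CommRing R] {A : Matrix ι ι R} {i : ι}

theorem residual_mul_inv_apply_self (hA : IsUnit A.det) {f e : ι → R} (hei : e i = 0)
    (hef : ∀ k ≠ i, (A *ᵥ e) k = f k) :
    (f i - (A *ᵥ e) i) * A⁻¹ i i = (A⁻¹ *ᵥ f) i := by
  have hres : f - A *ᵥ e = Pi.single i (f i - (A *ᵥ e) i) := by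
    funext k
    obtain rfl | hk := eq_or_ne k i
    · simp
    · simp [hk, hef k hk]
  calc (f i - (A *ᵥ e) i) * A⁻¹ i i = (A⁻¹ *ᵥ (f - A *ᵥ e)) i := by
        simp [hres, mul_comm]
    _ = (A⁻¹ *ᵥ f) i := by
        rw [mulVec_sub, mulVec_mulVec, nonsing_inv_mul A hA, one_mulVec, Pi.sub_apply, hei,
          sub_zero]

/-- The leave-one-out residual at `i`: the error at `i` of the interpolant fitted to the data `f`
at all other nodes, whose coefficients solve the system with row and column `i` of `A` deleted.
If that system is not invertible, Mathlib's inverse is `0` and the residual is `f i`. -/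
noncomputable def looResidual (A : Matrix ι ι R) (f : ι → R) (i : ι) : R :=
  f i - ∑ k : {k // k ≠ i},
    A i k * ((A.toSquareBlockProp (· ≠ i))⁻¹ *ᵥ fun l : {l // l ≠ i} => f l) k

theorem looResidual_mul_inv_apply_self (hA : IsUnit A.det)
    (hB : IsUnit (A.toSquareBlockProp (· ≠ i)).det) (f : ι → R) :
    looResidual A f i * A⁻¹ i i = (A⁻¹ *ᵥ f) i := by
  let B := A.toSquareBlockProp (· ≠ i)
  let g : {k // k ≠ i} → R := fun k => f k
  let e : ι → R := Function.extend Subtype.val (B⁻¹ *ᵥ g) 0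
  have hBd : B *ᵥ B⁻¹ *ᵥ g = g := by rw [mulVec_mulVec, mul_nonsing_inv B hB, one_mulVec]
  have hAe : A *ᵥ e = A.submatrix id Subtype.val *ᵥ B⁻¹ *ᵥ g :=
    mulVec_extend_zero Subtype.val_injective A _
  have hei : e i = 0 := Function.extend_apply' _ _ _ fun ⟨k, hk⟩ => k.2 hk
  have hef : ∀ k ≠ i, (A *ᵥ e) k = f k := fun k hk =>
    (congrFun hAe k).trans (congrFun hBd ⟨k, hk⟩)
  have hloo : looResidual A f i = f i - (A *ᵥ e) i := by
    rw [hAe]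
    rfl
  rw [hloo, residual_mul_inv_apply_self hA hei hef]

theorem isUnit_inv_apply_self (hA : IsUnit A.det)
    (hB : IsUnit (A.toSquareBlockProp (· ≠ i)).det) : IsUnit (A⁻¹ i i) := by
  refine .of_mul_eq_one_right (looResidual A (A *ᵥ Pi.single i 1) i) ?_
  rw [looResidual_mul_inv_apply_self hA hB, mulVec_mulVec, nonsing_inv_mul A hA, one_mulVec,
    Pi.single_eq_same]

theorem rippa_loocv_identity_general (hA : IsUnit A.det)
    (hB : IsUnit (A.toSquareBlockProp (· ≠ i)).det) (f : ι → R) :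
    IsUnit (A⁻¹ i i) ∧ looResidual A f i * A⁻¹ i i = (A⁻¹ *ᵥ f) i :=
  ⟨isUnit_inv_apply_self hA hB, looResidual_mul_inv_apply_self hA hB f⟩

end LeaveOneOut

/-- Rippa's LOOCV identity: for an invertible `N × N` real matrix `A`
(`N ≥ 2`), `c = A⁻¹ f`, an index `i`, the submatrix `B` of `A` deleting row and column `i`
(assumed invertible), `g` the vector `f` with its `i`-th entry deleted, and `d = B⁻¹ g`,
the leave-one-out residual satisfies
`f i - ∑_{k ≠ i} A i k * d k = c i / (A⁻¹ i i)`, with `(A⁻¹) i i ≠ 0`. -/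
theorem rippa_loocv_identity
    (N : ℕ) (hN : 2 ≤ N)
    (A : Matrix (Fin N) (Fin N) ℝ) (hA : IsUnit A.det)
    (f : Fin N → ℝ) (i : Fin N)
    (c : Fin N → ℝ) (hc : c = Matrix.mulVec A⁻¹ f)
    (B : Matrix {k : Fin N // k ≠ i} {k : Fin N // k ≠ i} ℝ)
    (hB : B = fun k l => A k.1 l.1)
    (hBinv : IsUnit B.det)
    (g : {k : Fin N // k ≠ i} → ℝ) (hg : g = fun k => f k.1)
    (d : {k : Fin N // k ≠ i} → ℝ) (hd : d = Matrix.mulVec B⁻¹ g) :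
    A⁻¹ i i ≠ 0 ∧
      f i - ∑ k : {k : Fin N // k ≠ i}, A i k.1 * d k = c i / A⁻¹ i i := by
  subst hc hB hg hd
  obtain ⟨hunit, hres⟩ := rippa_loocv_identity_general hA hBinv f
  exact ⟨hunit.ne_zero, eq_div_of_mul_eq hunit.ne_zero hres⟩
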